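/- Let Γ be a finitely generated group and suppose N ⊴ Γ is a normal subgroup of finite index which is self-simulable. Then Γ is self-simulable. -/

import Mathlib

open scoped Pointwise

namespace SelfSim

/-- The left shift action of a group `G` on the full shift `G → A`:
`(g · x)(h) = x (g⁻¹ h)`. -/
def shift {G A : Type*} [Group G] (g : G) (x : G → A) : G → A := fun h => x (g⁻¹ * h)

/-- A `G`-subshift: a closed, shift-invariant subset of the full shift `G → A`
(`A` carrying its topology, `G → A` the product topology). -/
def IsSubshift {G A : Type*} [Group G] [TopologicalSpace A] (X : Set (G → A)) : Prop :=
  IsClosed X ∧ ∀ (g : G) (x : G → A), x ∈ X → shift g x ∈ X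

/-- A subshift of finite type: there are a finite set `F ⊆ G` and a set `𝓛` of patterns
on `F` such that `x ∈ X` iff every translate of `x` restricted to `F` lies in `𝓛`. -/
def IsSFT {G A : Type*} [Group G] (X : Set (G → A)) : Prop :=
  ∃ (F : Finset G) (L : Set (↥F → A)),
    ∀ x : G → A, x ∈ X ↔ ∀ g : G, (fun h : ↥F => x (g * (h : G))) ∈ L

/-- `φ` is a topological factor map from the shift action on `Z ⊆ G → A` onto the
action `act` of `G` on `Y ⊆ β`: continuous on `Z`, mapping `Z` into and onto `Y`,
and equivariant. -/
def IsFactorMapOnto {G A β : Type*} [Group G] [TopologicalSpace A] [TopologicalSpace β]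
    (Z : Set (G → A)) (φ : (G → A) → β) (act : G → β → β) (Y : Set β) : Prop :=
  ContinuousOn φ Z ∧ Set.MapsTo φ Z Y ∧ Set.SurjOn φ Z Y ∧
    ∀ (g : G) (x : G → A), x ∈ Z → φ (shift g x) = act g (φ x)

/-- A sofic subshift: a topological factor of some subshift of finite type
(over some finite alphabet, which we may take to be `Fin k`). -/
def IsSofic {G A : Type*} [Group G] [TopologicalSpace A] (Y : Set (G → A)) : Prop :=
  ∃ (k : ℕ) (Z : Set (G → Fin k)) (φ : (G → Fin k) → (G → A)),
    IsSFT Z ∧ IsFactorMapOnto Z φ shift Y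

/-- Recursively enumerable predicate. -/
def RE {α : Type*} [Primcodable α] (p : α → Prop) : Prop :=
  Partrec fun a => Part.assert (p a) fun _ => Part.some ()

/-- `x : ℕ → A` begins with the finite word `w`. -/
def ExtendsWord {A : Type*} (x : ℕ → A) (w : List A) : Prop :=
  ∀ i : Fin w.length, x i = w.get i

/-- A closed subset `Z ⊆ A^ℕ` is effectively closed if the set of words whose
cylinder is disjoint from `Z` is recursively enumerable. -/
def EffectivelyClosedSet {A : Type*} [Primcodable A] [TopologicalSpace A]
    (Z : Set (ℕ → A)) : Prop :=
  IsClosed Z ∧ RE fun w : List A => ∀ x : ℕ → A, ExtendsWord x w → x ∉ Z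

/-- `act` defines an action of `G` on the set `X ⊆ β`. -/
def IsActionOn {G β : Type*} [Group G] (act : G → β → β) (X : Set β) : Prop :=
  (∀ g : G, Set.MapsTo (act g) X X) ∧ (∀ x ∈ X, act 1 x = x) ∧
    ∀ (g h : G) (x : β), x ∈ X → act (g * h) x = act g (act h x)

/-- The set representation of the action `act` of `G` on `X ⊆ A^ℕ` with respect to the
finite generating tuple `s : Fin m → G` (playing the role of the generating set `S`):
the set of `y ∈ (A^S)^ℕ` of the form `y(n)(s) = (s · x)(n)` for some `x ∈ X`. -/
def SetRep {G A : Type*} [Group G] {m : ℕ} (s : Fin m → G)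
    (act : G → (ℕ → A) → ℕ → A) (X : Set (ℕ → A)) : Set (ℕ → (Fin m → A)) :=
  {y | ∃ x ∈ X, ∀ i : Fin m, (fun n => y n i) = act (s i) x}

/-- The action `act` of `G` on the closed set `X ⊆ A^ℕ` is effectively closed with respect
to the finite generating tuple `s` (which contains `1` and generates `G` as a monoid):
its set representation is an effectively closed subset of `(A^S)^ℕ`. -/
def IsEffClosedActionWith {G A : Type*} [Group G] [Primcodable A] [TopologicalSpace A]
    {m : ℕ} (s : Fin m → G) (act : G → (ℕ → A) → ℕ → A) (X : Set (ℕ → A)) : Prop :=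
  IsClosed X ∧ IsActionOn act X ∧ (∃ i, s i = 1) ∧
    Submonoid.closure (Set.range s) = ⊤ ∧
    EffectivelyClosedSet (SetRep s act X)

/-- The action `act` of `G` on `X ⊆ A^ℕ` is effectively closed (with respect to some
finite generating set containing `1`). -/
def IsEffClosedAction {G A : Type*} [Group G] [Primcodable A] [TopologicalSpace A]
    (act : G → (ℕ → A) → ℕ → A) (X : Set (ℕ → A)) : Prop :=
  ∃ (m : ℕ) (s : Fin m → G), IsEffClosedActionWith s act X

/-- The action `act` of `G` on `X ⊆ A^ℕ` is a topological factor of some `G`-subshift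
of finite type. -/
def IsFactorOfSFT {G A : Type*} [Group G] [TopologicalSpace A]
    (act : G → (ℕ → A) → ℕ → A) (X : Set (ℕ → A)) : Prop :=
  ∃ (k : ℕ) (Z : Set (G → Fin k)) (φ : (G → Fin k) → (ℕ → A)),
    IsSFT Z ∧ IsFactorMapOnto Z φ act X

/-- A group `G` is (dynamically) self-simulable if every effectively closed action of `G`
on a closed subset of `{0,1}^ℕ` is a topological factor of a `G`-subshift of finite type. -/
def SelfSimulable (G : Type*) [Group G] : Prop :=
  ∀ (X : Set (ℕ → Bool)) (act : G → (ℕ → Bool) → ℕ → Bool),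
    IsEffClosedAction act X → IsFactorOfSFT act X

/-- Amenability via the Følner condition: for every finite `K` and `δ > 0` there is a
nonempty finite `F` with `|KF △ F| ≤ δ |F|`. -/
def Amenable (G : Type*) [Group G] : Prop :=
  ∀ K : Set G, K.Finite → ∀ δ : ℝ, 0 < δ →
    ∃ F : Set G, F.Finite ∧ F.Nonempty ∧
      ((symmDiff (K * F) F).ncard : ℝ) ≤ δ * F.ncard

/-- A finitely generated group is recursively presented: for some finite tuple generating
`G` as a monoid, the set of words evaluating to the identity is recursively enumerable. -/
def RecursivelyPresented (G : Type*) [Group G] : Prop :=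
  ∃ (m : ℕ) (s : Fin m → G), Submonoid.closure (Set.range s) = ⊤ ∧
    RE fun w : List (Fin m) => (w.map s).prod = 1

/-- A finitely generated group has decidable word problem: for some finite tuple generating
`G` as a monoid, the set of words evaluating to the identity is decidable. -/
def DecidableWordProblem (G : Type*) [Group G] : Prop :=
  ∃ (m : ℕ) (s : Fin m → G), Submonoid.closure (Set.range s) = ⊤ ∧
    ComputablePred fun w : List (Fin m) => (w.map s).prod = 1

/-- A pattern coding `c` (a finite list of pairs (word over the generators, letter))
holds in the configuration `x` at position `g`: `x (g ⬝ w̲) = a` for every pair `(w, a)`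
of `c`. This says exactly that `x ∈ g·[c]`. -/
def PCHolds {G A : Type*} [Group G] {m : ℕ} (s : Fin m → G) (x : G → A) (g : G)
    (c : List (List (Fin m) × A)) : Prop :=
  ∀ p ∈ c, x (g * (p.1.map s).prod) = p.2

/-- A `G`-subshift `X ⊆ A^G` is effectively closed by patterns: for some finite generating
tuple `s`, there is a recursively enumerable set `𝒞` of pattern codings such that `X` is the
set of configurations avoiding every translate of every cylinder `[c]`, `c ∈ 𝒞`. -/
def EffClosedByPatterns {G A : Type*} [Group G] [Primcodable A] (X : Set (G → A)) : Prop :=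
  ∃ (m : ℕ) (s : Fin m → G), Submonoid.closure (Set.range s) = ⊤ ∧
    ∃ 𝒞 : Set (List (List (Fin m) × A)), RE (· ∈ 𝒞) ∧
      X = {x : G → A | ∀ (g : G) (c : List (List (Fin m) × A)), c ∈ 𝒞 → ¬ PCHolds s x g c}

/-- Word metric distance associated to a finite tuple `s` generating `G` as a monoid. -/
noncomputable def wordDist {G : Type*} [Group G] {m : ℕ} (s : Fin m → G) (g h : G) : ℕ :=
  sInf {n : ℕ | ∃ w : List (Fin m), w.length = n ∧ (w.map s).prod = g⁻¹ * h}

/-- Two finitely generated groups are quasi-isometric (with respect to word metrics given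
by some finite generating sets). -/
def QuasiIsometric (G₁ G₂ : Type*) [Group G₁] [Group G₂] : Prop :=
  ∃ (m₁ : ℕ) (s₁ : Fin m₁ → G₁) (m₂ : ℕ) (s₂ : Fin m₂ → G₂),
    Submonoid.closure (Set.range s₁) = ⊤ ∧ Submonoid.closure (Set.range s₂) = ⊤ ∧
    ∃ (f : G₂ → G₁) (A B C : ℝ), 1 ≤ A ∧ 0 ≤ B ∧ 0 ≤ C ∧
      (∀ x y : G₂,
        (1 / A) * (wordDist s₂ x y : ℝ) - B ≤ (wordDist s₁ (f x) (f y) : ℝ) ∧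
        (wordDist s₁ (f x) (f y) : ℝ) ≤ A * (wordDist s₂ x y : ℝ) + B) ∧
      ∀ z : G₁, ∃ x : G₂, (wordDist s₁ z (f x) : ℝ) ≤ C

/-- A finitely presented group: a quotient of a finitely generated free group by the
normal closure of finitely many relators. -/
def FinitelyPresentedGroup (G : Type*) [Group G] : Prop :=
  ∃ (m : ℕ) (f : FreeGroup (Fin m) →* G) (R : Finset (FreeGroup (Fin m))),
    Function.Surjective f ∧ f.ker = Subgroup.normalClosure (R : Set (FreeGroup (Fin m)))

/-- A subgroup `Δ ≤ G` is mediated: there is a finite generating set `T` of `G` such that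
`Δ ∩ tΔt⁻¹` is non-amenable for every `t ∈ T`. -/
def Mediated {G : Type*} [Group G] (Δ : Subgroup G) : Prop :=
  ∃ T : Finset G, Subgroup.closure (T : Set G) = ⊤ ∧
    ∀ t ∈ T, ¬ Amenable ↥(Δ ⊓ Subgroup.map (MulAut.conj t).toMonoidHom Δ)

end SelfSim
namespace SelfSim

theorem RE_stage {α : Type*} [Primcodable α] {p : α → Prop} (hp : RE p) :
    ∃ q : α → ℕ → Prop, PrimrecRel q ∧ (∀ a, p a ↔ ∃ t, q a t) ∧
      ∀ a t t', t ≤ t' → q a t → q a t' := by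
  obtain ⟨c, hc⟩ := Nat.Partrec.Code.exists_code.1 hp
  refine ⟨fun a t => ((Nat.Partrec.Code.evaln t c (Encodable.encode a)).isSome = true), ?_, ?_, ?_⟩
  · refine Primrec.primrecPred ?_
    have h : Primrec fun x : α × ℕ =>
        (Nat.Partrec.Code.evaln x.2 c (Encodable.encode x.1)).isSome :=
      Primrec.option_isSome.comp (Nat.Partrec.Code.primrec_evaln.comp
        ((Primrec.snd.pair (Primrec.const c)).pair (Primrec.encode.comp Primrec.fst)))
    exact h.of_eq fun x => by simp
  · intro a
    have h1 : p a ↔ (Nat.Partrec.Code.eval c (Encodable.encode a)).Dom := by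
      rw [hc]
      simp [Part.assert]
    rw [h1, Part.dom_iff_mem]
    simp only [Nat.Partrec.Code.evaln_complete, Option.isSome_iff_exists]
    constructor
    · rintro ⟨y, k, h⟩; exact ⟨k, y, h⟩
    · rintro ⟨k, y, h⟩; exact ⟨y, k, h⟩
  · intro a t t' htt h
    rw [Option.isSome_iff_exists] at h ⊢
    obtain ⟨y, hy⟩ := h
    exact ⟨y, Nat.Partrec.Code.evaln_mono htt hy⟩

theorem RE_of_stage {α : Type*} [Primcodable α] {p : α → Prop} {q : α → ℕ → Prop}
    (hq : PrimrecRel q) (h : ∀ a, p a ↔ ∃ t, q a t) : RE p := by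
  classical
  have h1 : Partrec fun a : α => Nat.rfind fun n => Part.some (decide (q a n)) :=
    Partrec.rfind (Computable₂.partrec₂ (hq.decide.to_comp))
  refine (Partrec.dom_re h1).of_eq fun a => ?_
  rw [h]
  exact Nat.rfind_dom.trans (by simp)

noncomputable def allWords (A : Type*) [Fintype A] : ℕ → List (List A) :=
  fun n => Nat.rec [[]] (fun _ l => l.flatMap fun v => (Finset.univ : Finset A).toList.map (· :: v)) n

theorem mem_allWords {A : Type*} [Fintype A] (n : ℕ) (v : List A) :
    v ∈ allWords A n ↔ v.length = n := by
  induction n generalizing v with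
  | zero => simp [allWords]
  | succ n ih =>
    have : allWords A (n+1) = (allWords A n).flatMap
      fun v => (Finset.univ : Finset A).toList.map (· :: v) := rfl
    rw [this]
    simp only [List.mem_flatMap, ih, List.mem_map, Finset.mem_toList, Finset.mem_univ, true_and]
    constructor
    · rintro ⟨a, rfl, b, rfl⟩; simp
    · intro h
      cases v with
      | nil => simp at h
      | cons b v => exact ⟨v, by simpa using h, b, rfl⟩

theorem primrec_allWords (A : Type*) [Fintype A] [Primcodable A] : Primrec (allWords A) := by
  refine Primrec.nat_rec₁ _ ?_
  refine Primrec.list_flatMap Primrec.snd ?_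
  refine Primrec.list_map (Primrec.const _) ?_
  exact Primrec.list_cons.comp Primrec.snd (Primrec.snd.comp Primrec.fst)

theorem primrec_constraint {M m : ℕ} {q : List (Fin m → Bool) → ℕ → Prop} (hq : PrimrecRel q)
    (S : List (Fin m → Fin M)) :
    PrimrecRel fun (v : List (Fin M → Bool)) (t : ℕ) =>
      ∃ σ ∈ S, q (v.map (fun a => a ∘ σ)) t := by
  induction S with
  | nil =>
    have : PrimrecPred fun _ : List (Fin M → Bool) × ℕ => False :=
      Primrec.primrecPred ((Primrec.const false).of_eq fun x => by simp)
    exact this.of_eq fun x => by simp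
  | cons σ S ih =>
    have h1 : Primrec fun v : List (Fin M → Bool) × ℕ => v.1.map (fun a => a ∘ σ) :=
      Primrec.list_map Primrec.fst
        ((Primrec.dom_finite (fun a : Fin M → Bool => a ∘ σ)).comp Primrec.snd)
    have h2 : PrimrecPred fun v : List (Fin M → Bool) × ℕ => q (v.1.map (fun a => a ∘ σ)) v.2 :=
      hq.comp h1 Primrec.snd
    exact (h2.or ih).of_eq fun x => by simp

theorem isClosed_of_dep {A : Type*} [TopologicalSpace A] [DiscreteTopology A]
    (S : Set (ℕ → A)) (n : ℕ)
    (h : ∀ x y : ℕ → A, (∀ i < n, x i = y i) → x ∈ S → y ∈ S) : IsClosed S := by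
  let r : (ℕ → A) → (Fin n → A) := fun x i => x i
  have hr : Continuous r := by fun_prop
  have : S = r ⁻¹' (r '' S) := by
    ext y
    constructor
    · intro hy; exact ⟨y, hy, rfl⟩
    · rintro ⟨x, hx, hxy⟩
      exact h x y (fun i hi => congrFun hxy ⟨i, hi⟩) hx
  rw [this]
  exact (isClosed_discrete _).preimage hr

theorem exists_prefix_of_notMem {A : Type*} [TopologicalSpace A]
    {Y : Set (ℕ → A)} (hY : IsClosed Y) {y : ℕ → A} (hy : y ∉ Y) :
    ∃ n, ∀ x : ℕ → A, (∀ i < n, x i = y i) → x ∉ Y := by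
  obtain ⟨I, u, hu, hsub⟩ := isOpen_pi_iff.1 hY.isOpen_compl y hy
  refine ⟨I.sup id + 1, fun x hx => hsub ?_⟩
  intro i hi
  rw [hx i (Nat.lt_succ_of_le (Finset.le_sup (f := id) hi))]
  exact (hu i hi).2

theorem extendsWord_map_range {A : Type*} (x y : ℕ → A) (n : ℕ) :
    ExtendsWord x ((List.range n).map y) ↔ ∀ i < n, x i = y i := by
  constructor
  · intro h i hi
    have := h ⟨i, by simpa using hi⟩
    simpa using this
  · rintro h ⟨i, hi⟩
    have hi' : i < n := by simpa using hi
    simpa using h i hi'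

theorem extendsWord_iff {A : Type*} (x : ℕ → A) (w : List A) :
    ExtendsWord x w ↔ ∀ i < w.length, some (x i) = w[i]? := by
  constructor
  · intro h i hi
    have := h ⟨i, hi⟩
    simp [this, hi]
  · rintro h ⟨i, hi⟩
    have := h i hi
    simpa [hi] using this

/-- Projection of a finite intersection of coordinate preimages of `Y`. -/
def ProjSet {m m' M : ℕ} (Y : Set (ℕ → (Fin m → Bool))) (S : List (Fin m → Fin M))
    (f : Fin m' → Fin M) : Set (ℕ → (Fin m' → Bool)) :=
  {y' | ∃ y : ℕ → (Fin M → Bool), (∀ σ ∈ S, (fun n => y n ∘ σ) ∈ Y) ∧ y' = fun n => y n ∘ f}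

theorem isClosed_projSet {m m' M : ℕ} {Y : Set (ℕ → (Fin m → Bool))} (hY : IsClosed Y)
    (S : List (Fin m → Fin M)) (f : Fin m' → Fin M) : IsClosed (ProjSet Y S f) := by
  let K : Set (ℕ → (Fin M → Bool)) := {y | ∀ σ ∈ S, (fun n => y n ∘ σ) ∈ Y}
  have hK : IsClosed K := by
    have : K = ⋂ σ ∈ S, (fun y : ℕ → (Fin M → Bool) => fun n => y n ∘ σ) ⁻¹' Y := by
      ext y; simp [K]
    rw [this]
    refine isClosed_biInter fun σ _ => hY.preimage ?_
    unfold Function.comp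
    fun_prop
  have : ProjSet Y S f = (fun y : ℕ → (Fin M → Bool) => fun n => y n ∘ f) '' K := by
    ext y'
    constructor
    · rintro ⟨y, h, rfl⟩; exact ⟨y, h, rfl⟩
    · rintro ⟨y, h, rfl⟩; exact ⟨y, h, rfl⟩
  rw [this]
  refine (hK.isCompact.image ?_).isClosed
  unfold Function.comp
  fun_prop

theorem projSet_forbidden_iff {m m' M : ℕ} {Y : Set (ℕ → (Fin m → Bool))} (hY : IsClosed Y)
    (S : List (Fin m → Fin M)) (f : Fin m' → Fin M) (w : List (Fin m' → Bool)) :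
    (∀ x, ExtendsWord x w → x ∉ ProjSet Y S f) ↔
    ∃ n, w.length ≤ n ∧ ∀ v ∈ allWords (Fin M → Bool) n,
      (∀ i < w.length, v[i]?.map (fun a => a ∘ f) = w[i]?) →
      ∃ σ ∈ S, ∀ x, ExtendsWord x (v.map (fun a => a ∘ σ)) → x ∉ Y := by
  constructor
  · intro H
    by_contra hcon
    push Not at hcon
    let C : ℕ → Set (ℕ → (Fin M → Bool)) := fun n =>
      {y | (∀ i < w.length, some (y i ∘ f) = w[i]?) ∧
        ∀ σ ∈ S, ∃ x ∈ Y, ∀ i < n + w.length, x i = y i ∘ σ}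
    have hcl : ∀ n, IsClosed (C n) := by
      intro n
      refine isClosed_of_dep _ (n + w.length) ?_
      rintro x y hxy ⟨h1, h2⟩
      refine ⟨fun i hi => ?_, fun σ hσ => ?_⟩
      · rw [← hxy i (by omega)]; exact h1 i hi
      · obtain ⟨z, hz, hz'⟩ := h2 σ hσ
        exact ⟨z, hz, fun i hi => by rw [← hxy i hi]; exact hz' i hi⟩
    have hne : (⋂ n, C n).Nonempty := by
      refine IsCompact.nonempty_iInter_of_sequence_nonempty_isCompact_isClosed C ?_ ?_ ?_ hcl
      · rintro n y ⟨h1, h2⟩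
        refine ⟨h1, fun σ hσ => ?_⟩
        obtain ⟨z, hz, hz'⟩ := h2 σ hσ
        exact ⟨z, hz, fun i hi => hz' i (by omega)⟩
      · intro n
        obtain ⟨v, hv, hvw, hS⟩ := hcon (n + w.length) (by omega)
        rw [mem_allWords] at hv
        refine ⟨fun i => v.getD i (fun _ => false), fun i hi => ?_, fun σ hσ => ?_⟩
        · rw [← hvw i hi]
          have : i < v.length := by omega
          simp [this]
        · obtain ⟨x, hx, hxY⟩ := hS σ hσ
          refine ⟨x, hxY, fun i hi => ?_⟩
          have hi' : i < v.length := by omega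
          have := hx ⟨i, by simpa using hi'⟩
          simpa [hi'] using this
      · exact (hcl 0).isCompact
    obtain ⟨y, hy⟩ := hne
    rw [Set.mem_iInter] at hy
    refine H (fun n => y n ∘ f) ((extendsWord_iff _ _).2 (hy 0).1) ⟨y, fun σ hσ => ?_, rfl⟩
    by_contra hn
    obtain ⟨n, hn⟩ := exists_prefix_of_notMem hY hn
    obtain ⟨x, hx, hx'⟩ := (hy n).2 σ hσ
    exact hn x (fun i hi => hx' i (by omega)) hx
  · rintro ⟨n, hn, H⟩ x hx ⟨y, hy, rfl⟩
    obtain ⟨σ, hσ, hσ'⟩ := H ((List.range n).map y) (by simp [mem_allWords]) (by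
      intro i hi
      have := (extendsWord_iff _ _).1 hx i hi
      rw [← this]
      have : i < n := by omega
      simp [this])
    refine hσ' _ ?_ (hy σ hσ)
    rw [List.map_map]
    exact (extendsWord_map_range _ _ _).2 fun i _ => rfl

theorem effClosed_projSet {m m' M : ℕ} {Y : Set (ℕ → (Fin m → Bool))}
    (hY : EffectivelyClosedSet Y)
    (S : List (Fin m → Fin M)) (f : Fin m' → Fin M) :
    EffectivelyClosedSet (ProjSet Y S f) := by
  refine ⟨isClosed_projSet hY.1 S f, ?_⟩
  obtain ⟨q, hq, hpq, hmono⟩ := RE_stage hY.2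
  let R : List (Fin M → Bool) → List (Fin m' → Bool) × ℕ → Prop := fun v b =>
    ¬ (∀ i < b.1.length, v[i]?.map (fun a => a ∘ f) = b.1[i]?) ∨
      ∃ σ ∈ S, q (v.map (fun a => a ∘ σ)) b.2
  have hR : PrimrecRel R := by
    refine PrimrecPred.or (PrimrecPred.not ?_) ?_
    · have h1 : PrimrecRel fun (i : ℕ) (x : List (Fin M → Bool) × List (Fin m' → Bool) × ℕ) =>
          x.1[i]?.map (fun a => a ∘ f) = x.2.1[i]? := by
        refine Primrec.eq.comp ?_ ?_
        · refine Primrec.option_map (Primrec.list_getElem?.comp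
            (Primrec.fst.comp Primrec.snd) Primrec.fst) ?_
          exact (Primrec.dom_finite (fun a : Fin M → Bool => a ∘ f)).comp Primrec.snd
        · exact Primrec.list_getElem?.comp
            (Primrec.fst.comp (Primrec.snd.comp Primrec.snd)) Primrec.fst
      have h2 := PrimrecRel.forall_mem_list h1
      have h3 : Primrec fun x : List (Fin M → Bool) × List (Fin m' → Bool) × ℕ => x.2.1.length :=
        Primrec.list_length.comp (Primrec.fst.comp Primrec.snd)
      exact (PrimrecRel.comp h2 (Primrec.list_range.comp h3) Primrec.id).of_eq fun x => by simp
    · exact (primrec_constraint hq S).comp Primrec.fst (Primrec.snd.comp Primrec.snd)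
  have hQ : PrimrecRel fun (w : List (Fin m' → Bool)) (p : ℕ) =>
      w.length ≤ p.unpair.1 ∧ ∀ v ∈ allWords (Fin M → Bool) p.unpair.1, R v (w, p.unpair.2) := by
    have hu : Primrec fun x : List (Fin m' → Bool) × ℕ => x.2.unpair :=
      Primrec.unpair.comp Primrec.snd
    refine PrimrecPred.and ?_ ?_
    · exact Primrec.nat_le.comp (Primrec.list_length.comp Primrec.fst) (Primrec.fst.comp hu)
    · exact hR.forall_mem_list.comp ((primrec_allWords _).comp (Primrec.fst.comp hu))
        (Primrec.fst.pair (Primrec.snd.comp hu))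
  refine RE_of_stage hQ fun w => ?_
  rw [projSet_forbidden_iff hY.1]
  constructor
  · rintro ⟨n, hn, H⟩
    have hT : ∀ v ∈ allWords (Fin M → Bool) n, ∃ t, ∀ t' ≥ t, R v (w, t') := by
      intro v hv
      by_cases hc : ∀ i < w.length, v[i]?.map (fun a => a ∘ f) = w[i]?
      · obtain ⟨σ, hσ, h⟩ := H v hv hc
        obtain ⟨t, ht⟩ := (hpq _).1 h
        exact ⟨t, fun t' htt => Or.inr ⟨σ, hσ, hmono _ _ _ htt ht⟩⟩
      · exact ⟨0, fun t' _ => Or.inl hc⟩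
    have hT' : ∀ l : List (List (Fin M → Bool)), (∀ v ∈ l, ∃ t, ∀ t' ≥ t, R v (w, t')) →
        ∃ t, ∀ v ∈ l, ∀ t' ≥ t, R v (w, t') := by
      intro l
      induction l with
      | nil => simp
      | cons v l ih =>
        intro h
        obtain ⟨t, ht⟩ := ih fun v hv => h v (List.mem_cons_of_mem _ hv)
        obtain ⟨s, hs⟩ := h v List.mem_cons_self
        refine ⟨max s t, fun u hu t' ht' => ?_⟩
        rcases List.mem_cons.1 hu with rfl | hu
        · exact hs t' (le_trans (le_max_left _ _) ht')
        · exact ht u hu t' (le_trans (le_max_right _ _) ht')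
    obtain ⟨t, ht⟩ := hT' _ hT
    refine ⟨Nat.pair n t, ?_⟩
    simp only [Nat.unpair_pair]
    exact ⟨hn, fun v hv => ht v hv t le_rfl⟩
  · rintro ⟨p, hp, H⟩
    refine ⟨p.unpair.1, hp, fun v hv hc => ?_⟩
    rcases H v hv with h | ⟨σ, hσ, h⟩
    · exact absurd hc h
    · exact ⟨σ, hσ, (hpq _).2 ⟨_, h⟩⟩

end SelfSim
namespace SelfSim

theorem setRep_double {G : Type*} [Group G] {m : ℕ} (s : Fin m → G)
    (act : G → (ℕ → Bool) → ℕ → Bool) (X : Set (ℕ → Bool)) (hact : IsActionOn act X)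
    (i0 : Fin m) (hi0 : s i0 = 1) :
    SetRep (fun k : Fin (m * m) => s (finProdFinEquiv.symm k).1 * s (finProdFinEquiv.symm k).2)
      act X =
    ProjSet (SetRep s act X)
      ((fun j => finProdFinEquiv (i0, j)) ::
        (List.finRange m).map (fun j i => finProdFinEquiv (i, j))) id := by
  obtain ⟨hm, h1, h2⟩ := hact
  ext y
  constructor
  · rintro ⟨x, hx, hy⟩
    have hy' : ∀ i j, (fun n => y n (finProdFinEquiv (i, j))) = act (s i) (act (s j) x) := by
      intro i j
      rw [hy, ← h2 _ _ _ hx]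
      simp
    refine ⟨y, ?_, rfl⟩
    intro σ hσ
    rcases List.mem_cons.1 hσ with rfl | hσ
    · refine ⟨x, hx, fun j => ?_⟩
      have := hy' i0 j
      rw [hi0, h1 _ (hm _ hx)] at this
      exact this
    · obtain ⟨j, -, rfl⟩ := List.mem_map.1 hσ
      exact ⟨act (s j) x, hm _ hx, fun i => hy' i j⟩
  · rintro ⟨y, hy, rfl⟩
    obtain ⟨x, hx, hxy⟩ := hy _ List.mem_cons_self
    refine ⟨x, hx, fun k => ?_⟩
    obtain ⟨⟨i, j⟩, rfl⟩ := finProdFinEquiv.surjective k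
    obtain ⟨x', hx', hxy'⟩ := hy (fun i => finProdFinEquiv (i, j))
      (List.mem_cons_of_mem _ (List.mem_map.2 ⟨j, List.mem_finRange j, rfl⟩))
    have e1 := hxy j
    have e2 := hxy' i0
    have e3 := hxy' i
    rw [hi0, h1 _ hx'] at e2
    simp only [Equiv.symm_apply_apply]
    rw [h2 _ _ _ hx, ← e1]
    refine Eq.trans e3 ?_
    rw [← e2]
    rfl

theorem setRep_proj {G : Type*} [Group G] {m m' : ℕ} (s : Fin m → G) (f : Fin m' → Fin m)
    (act : G → (ℕ → Bool) → ℕ → Bool) (X : Set (ℕ → Bool)) :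
    SetRep (s ∘ f) act X = ProjSet (SetRep s act X) [id] f := by
  ext y'
  constructor
  · rintro ⟨x, hx, hy⟩
    refine ⟨fun n i => act (s i) x n, ?_, ?_⟩
    · intro σ hσ
      rw [List.mem_singleton] at hσ
      subst hσ
      exact ⟨x, hx, fun i => rfl⟩
    · funext n i
      exact congrFun (hy i) n
  · rintro ⟨y, hy, rfl⟩
    obtain ⟨x, hx, hxy⟩ := hy id (List.mem_singleton.2 rfl)
    exact ⟨x, hx, fun i => hxy (f i)⟩

/-- A good tuple: contains `1` and has an effectively closed set representation. -/
def Good {G : Type*} [Group G] (act : G → (ℕ → Bool) → ℕ → Bool) (X : Set (ℕ → Bool))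
    (R : Set G) : Prop :=
  ∃ (m : ℕ) (s : Fin m → G), (∃ i, s i = 1) ∧ EffectivelyClosedSet (SetRep s act X) ∧
    Set.range s = R

theorem Good.double {G : Type*} [Group G] {act : G → (ℕ → Bool) → ℕ → Bool}
    {X : Set (ℕ → Bool)} (hact : IsActionOn act X) {R : Set G} (h : Good act X R) :
    ∃ R', Good act X R' ∧ R ⊆ R' ∧ ∀ a ∈ R, ∀ b ∈ R, a * b ∈ R' := by
  obtain ⟨m, s, ⟨i0, hi0⟩, he, rfl⟩ := h
  have hmul : ∀ a ∈ Set.range s, ∀ b ∈ Set.range s, a * b ∈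
      Set.range (fun k : Fin (m * m) =>
        s (finProdFinEquiv.symm k).1 * s (finProdFinEquiv.symm k).2) := by
    rintro _ ⟨i, rfl⟩ _ ⟨j, rfl⟩
    exact ⟨finProdFinEquiv (i, j), by simp⟩
  refine ⟨_, ⟨m * m, fun k => s (finProdFinEquiv.symm k).1 * s (finProdFinEquiv.symm k).2,
    ?_, ?_, rfl⟩, ?_, hmul⟩
  · exact ⟨finProdFinEquiv (i0, i0), by simp [hi0]⟩
  · rw [setRep_double s act X hact i0 hi0]
    exact effClosed_projSet he _ _
  · intro a ha
    have := hmul a ha 1 ⟨i0, hi0⟩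
    rwa [mul_one] at this

theorem Good.extend {G : Type*} [Group G] {act : G → (ℕ → Bool) → ℕ → Bool}
    {X : Set (ℕ → Bool)} (hact : IsActionOn act X) {R : Set G}
    (hgen : Submonoid.closure R = ⊤) (g : G) :
    ∀ R₁, Good act X R₁ → R ⊆ R₁ → ∃ R₂, Good act X R₂ ∧ R₁ ⊆ R₂ ∧ g ∈ R₂ := by
  have hg : g ∈ Submonoid.closure R := by rw [hgen]; trivial
  induction hg using Submonoid.closure_induction with
  | mem a ha => exact fun R₁ h hs => ⟨R₁, h, subset_rfl, hs ha⟩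
  | one =>
    intro R₁ h hs
    refine ⟨R₁, h, subset_rfl, ?_⟩
    obtain ⟨m, s, ⟨i0, hi0⟩, he, rfl⟩ := h
    exact ⟨i0, hi0⟩
  | mul a b _ _ iha ihb =>
    intro R₁ h hs
    obtain ⟨R₂, h₂, hs₂, ha⟩ := iha R₁ h hs
    obtain ⟨R₃, h₃, hs₃, hb⟩ := ihb R₂ h₂ (hs.trans hs₂)
    obtain ⟨R₄, h₄, hs₄, hab⟩ := h₃.double hact
    exact ⟨R₄, h₄, (hs₂.trans hs₃).trans hs₄, hab _ (hs₃ ha) _ hb⟩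

theorem Good.extend_finset {G : Type*} [Group G] {act : G → (ℕ → Bool) → ℕ → Bool}
    {X : Set (ℕ → Bool)} (hact : IsActionOn act X) {R : Set G} (hR : Good act X R)
    (hgen : Submonoid.closure R = ⊤) (F : Finset G) :
    ∃ R₂, Good act X R₂ ∧ R ⊆ R₂ ∧ (F : Set G) ⊆ R₂ := by
  classical
  induction F using Finset.induction_on with
  | empty => exact ⟨R, hR, subset_rfl, by simp⟩
  | insert g F _ ih =>
    obtain ⟨R₁, h₁, hs₁, hF⟩ := ih
    obtain ⟨R₂, h₂, hs₂, hg⟩ := Good.extend hact hgen g R₁ h₁ hs₁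
    refine ⟨R₂, h₂, hs₁.trans hs₂, ?_⟩
    rw [Finset.coe_insert]
    exact Set.insert_subset hg (hF.trans hs₂)

theorem restrict_effClosed {G : Type*} [Group G] (N : Subgroup G) (hN : Group.FG N)
    {act : G → (ℕ → Bool) → ℕ → Bool} {X : Set (ℕ → Bool)} (h : IsEffClosedAction act X) :
    IsEffClosedAction (fun n : N => act n) X := by
  classical
  obtain ⟨m, s, hX, hact, hone, hgen, he⟩ := h
  obtain ⟨S, hS⟩ := (Group.fg_iff_monoid_fg.1 hN).fg_top
  let S' : Finset N := insert 1 S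
  obtain ⟨R₂, ⟨M, t, -, ht, rfl⟩, -, hF⟩ := Good.extend_finset hact ⟨m, s, hone, he, rfl⟩ hgen
    (S'.image (fun n : N => (n : G)))
  let e := S'.equivFin
  let u : Fin S'.card → N := fun i => (e.symm i : N)
  have hu : ∀ n ∈ S', ∃ i, u i = n := fun n hn => ⟨e ⟨n, hn⟩, by simp [u]⟩
  have huS : ∀ i, u i ∈ S' := fun i => (e.symm i).2
  have hf : ∀ i, ∃ j, t j = (u i : G) := fun i => hF (by
    rw [Finset.coe_image]
    exact ⟨u i, huS i, rfl⟩)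
  choose f hf using hf
  refine ⟨S'.card, u, hX, ⟨fun g => hact.1 g, hact.2.1, fun g h x hx => hact.2.2 g h x hx⟩,
    hu 1 (Finset.mem_insert_self _ _), ?_, ?_⟩
  · rw [eq_top_iff, ← hS]
    refine Submonoid.closure_mono ?_
    intro n hn
    exact hu n (Finset.mem_insert_of_mem hn)
  · have : SetRep u (fun n : N => act n) X = SetRep (t ∘ f) act X := by
      ext y
      simp only [SetRep, Set.mem_ofPred_eq, Function.comp, hf]
    rw [this, setRep_proj]
    exact effClosed_projSet ht _ _

theorem continuousOn_gen {G : Type*} [Group G] {m : ℕ} {s : Fin m → G}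
    {act : G → (ℕ → Bool) → ℕ → Bool} {X : Set (ℕ → Bool)}
    (h : IsEffClosedActionWith s act X) (i : Fin m) : ContinuousOn (act (s i)) X := by
  obtain ⟨hX, hact, ⟨i0, hi0⟩, hgen, he⟩ := h
  rw [continuousOn_iff_isClosed]
  intro t ht
  let K : Set (ℕ → (Fin m → Bool)) := SetRep s act X ∩ (fun y n => y n i) ⁻¹' t
  have hK : IsClosed K := he.1.inter (ht.preimage (by fun_prop))
  refine ⟨(fun y n => y n i0) '' K, (hK.isCompact.image (by fun_prop)).isClosed, ?_⟩
  ext x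
  constructor
  · rintro ⟨hxt, hx⟩
    refine ⟨⟨fun n j => act (s j) x n, ⟨⟨x, hx, fun j => rfl⟩, hxt⟩, ?_⟩, hx⟩
    simp only [hi0]
    exact hact.2.1 x hx
  · rintro ⟨⟨y, ⟨⟨x', hx', hy⟩, hyt⟩, rfl⟩, hx⟩
    refine ⟨?_, hx⟩
    have e := hy i0
    rw [hi0, hact.2.1 _ hx'] at e
    simp only [Set.mem_preimage] at hyt ⊢
    rw [e, ← hy i]
    exact hyt

theorem continuousOn_act {G : Type*} [Group G]
    {act : G → (ℕ → Bool) → ℕ → Bool} {X : Set (ℕ → Bool)}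
    (h : IsEffClosedAction act X) (g : G) : ContinuousOn (act g) X := by
  obtain ⟨m, s, h⟩ := h
  have hg : g ∈ Submonoid.closure (Set.range s) := by rw [h.2.2.2.1]; trivial
  induction hg using Submonoid.closure_induction with
  | mem a ha => obtain ⟨i, rfl⟩ := ha; exact continuousOn_gen h i
  | one => exact continuousOn_id.congr fun x hx => h.2.1.2.1 x hx
  | mul a b _ _ iha ihb =>
    exact (iha.comp ihb (h.2.1.1 b)).congr fun x hx => h.2.1.2.2 a b x hx

end SelfSim
namespace SelfSim

theorem isSFT_of_local {G A : Type*} [Group G] (F : Finset G) (Q : (G → A) → Prop)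
    (hQ : ∀ x y : G → A, (∀ h ∈ F, x h = y h) → Q x → Q y) :
    IsSFT {x : G → A | ∀ g, Q (fun h => x (g * h))} := by
  refine ⟨F, {p | ∃ x : G → A, (∀ h : F, x h = p h) ∧ Q x}, fun x => forall_congr' fun g => ?_⟩
  constructor
  · intro h
    exact ⟨_, fun _ => rfl, h⟩
  · rintro ⟨y, hy, hq⟩
    exact hQ y _ (fun h hh => hy ⟨h, hh⟩) hq

theorem factor_induce {G : Type*} [Group G] (N : Subgroup G) (hN : Group.FG N)
    (hfi : N.FiniteIndex) {act : G → (ℕ → Bool) → ℕ → Bool} {X : Set (ℕ → Bool)}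
    (hact : IsActionOn act X) (hc : ∀ g, ContinuousOn (act g) X)
    (h : IsFactorOfSFT (fun n : N => act n) X) : IsFactorOfSFT act X := by
  classical
  obtain ⟨k, Z, φ, ⟨F, L, hZ⟩, hφc, hφm, hφs, hφe⟩ := h
  rcases X.eq_empty_or_nonempty with rfl | ⟨x0, hx0⟩
  · refine ⟨0, Set.univ, fun _ _ => false, ⟨∅, Set.univ, by simp⟩, ?_, ?_, ?_, ?_⟩
    · exact continuousOn_const
    · intro z; exact (z 1).elim0
    · exact Set.surjOn_empty _ _
    · intro g z; exact (z 1).elim0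
  obtain ⟨k, rfl⟩ : ∃ k', k = k' + 1 := by
    obtain ⟨z, -, -⟩ := hφs hx0
    have := (z 1).pos
    exact ⟨k - 1, by omega⟩
  obtain ⟨U, hU⟩ := hN.1
  have : Finite (G ⧸ N) := Subgroup.finite_quotient_of_finiteIndex
  have : Fintype (G ⧸ N) := Fintype.ofFinite _
  let T : Finset G := (Finset.univ : Finset (G ⧸ N)).image Quotient.out
  have hT : ∀ g : G, ∃ t ∈ T, t⁻¹ * g ∈ N := by
    intro g
    refine ⟨Quotient.out (g : G ⧸ N), Finset.mem_image_of_mem _ (Finset.mem_univ _), ?_⟩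
    rw [← QuotientGroup.eq]
    exact Quotient.out_eq _
  let d : Fin (k + 2) → Fin (k + 1) := Fin.cases 0 id
  have hd : ∀ a, d (Fin.succ a) = a := fun a => rfl
  let Q : (G → Fin (k + 2)) → Prop := fun x =>
    (∀ u ∈ U, (x (u : G) = 0 ↔ x 1 = 0)) ∧ (∃ t ∈ T, x t ≠ 0) ∧
    (∀ t ∈ T, ∀ t' ∈ T, x t ≠ 0 → x t' ≠ 0 → t⁻¹ * t' ∈ N) ∧
    (x 1 ≠ 0 → (fun h : F => d (x ((h : N) : G))) ∈ L)
  let F' : Finset G := insert 1 (U.image (fun n : N => (n : G)) ∪ T ∪ F.image (fun n : N => (n : G)))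
  have hF1 : (1 : G) ∈ F' := by simp [F']
  have hFU : ∀ u ∈ U, (u : G) ∈ F' := fun u hu => by
    simp only [F', Finset.mem_insert, Finset.mem_union, Finset.mem_image]
    exact Or.inr (Or.inl (Or.inl ⟨u, hu, rfl⟩))
  have hFT : ∀ u ∈ T, u ∈ F' := fun u hu => by
    simp only [F', Finset.mem_insert, Finset.mem_union]
    exact Or.inr (Or.inl (Or.inr hu))
  have hFF : ∀ u ∈ F, (u : G) ∈ F' := fun u hu => by
    simp only [F', Finset.mem_insert, Finset.mem_union, Finset.mem_image]
    exact Or.inr (Or.inr ⟨u, hu, rfl⟩)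
  have hQ : ∀ x y : G → Fin (k + 2), (∀ h ∈ F', x h = y h) → Q x → Q y := by
    rintro x y hxy ⟨q1, q2, q3, q4⟩
    refine ⟨fun u hu => ?_, ?_, fun t ht t' ht' => ?_, fun h1 => ?_⟩
    · rw [← hxy _ hF1, ← hxy _ (hFU u hu)]; exact q1 u hu
    · obtain ⟨t, ht, h⟩ := q2
      exact ⟨t, ht, by rw [← hxy _ (hFT t ht)]; exact h⟩
    · rw [← hxy _ (hFT t ht), ← hxy _ (hFT t' ht')]; exact q3 t ht t' ht'
    · rw [← hxy _ hF1] at h1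
      have := q4 h1
      have e : (fun h : F => d (y ((h : N) : G))) = (fun h : F => d (x ((h : N) : G))) := by
        funext h
        rw [hxy _ (hFF h h.2)]
      rw [e]; exact this
  let Z' : Set (G → Fin (k + 2)) := {x | ∀ g, Q (fun h => x (g * h))}
  have hZ' : IsSFT Z' := isSFT_of_local F' Q hQ
  have hcos : ∀ z ∈ Z', ∀ (n : N) (g : G), z (g * n) = 0 ↔ z g = 0 := by
    intro z hz n
    have hn : n ∈ Subgroup.closure (U : Set N) := by rw [hU]; trivial
    induction hn using Subgroup.closure_induction with
    | mem u hu =>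
      intro g
      have := (hz g).1 u hu
      simpa using this
    | one => simp
    | mul a b _ _ iha ihb =>
      intro g
      rw [Subgroup.coe_mul, ← mul_assoc, ihb, iha]
    | inv a _ iha =>
      intro g
      rw [← iha]
      simp
  have hex : ∀ z ∈ Z', ∃ g, z g ≠ 0 := by
    intro z hz
    obtain ⟨t, -, h⟩ := (hz 1).2.1
    exact ⟨_, h⟩
  have huniq : ∀ z ∈ Z', ∀ g g', z g ≠ 0 → z g' ≠ 0 → g⁻¹ * g' ∈ N := by
    intro z hz g g' hg hg'
    obtain ⟨t, ht, h⟩ := hT 1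
    obtain ⟨t', ht', h'⟩ := hT (g⁻¹ * g')
    have a1 : z (g * t) ≠ 0 := by
      intro h0
      apply hg
      rw [← hcos z hz ⟨_, h⟩] at h0
      simpa using h0
    have a2 : z (g * t') ≠ 0 := by
      intro h0
      apply hg'
      rw [← hcos z hz ⟨_, h'⟩] at h0
      simpa [mul_assoc] using h0
    have a3 := (hz g).2.2.1 t ht t' ht' a1 a2
    have := N.mul_mem (N.mul_mem (N.inv_mem h) a3) h'
    simpa [mul_assoc] using this
  let ex : (G → Fin (k + 2)) → G → (N → Fin (k + 1)) := fun z g n => d (z (g * n))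
  have hexZ : ∀ z ∈ Z', ∀ g, z g ≠ 0 → ex z g ∈ Z := by
    intro z hz g hg
    rw [hZ]
    intro n
    have h1 : z (g * n) ≠ 0 := fun h0 => hg ((hcos z hz n g).1 h0)
    have := (hz (g * n)).2.2.2 (by simpa using h1)
    simpa [ex, mul_assoc] using this
  have hwd : ∀ z ∈ Z', ∀ g g', z g ≠ 0 → z g' ≠ 0 →
      act g' (φ (ex z g')) = act g (φ (ex z g)) := by
    intro z hz g g' hg hg'
    have hn := huniq z hz g g' hg hg'
    let n : N := ⟨_, hn⟩
    have hg'' : g' = g * n := by simp [n]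
    have e : ex z g' = shift n⁻¹ (ex z g) := by
      funext n'
      simp [ex, shift, hg'', mul_assoc]
    have hX := hφm (hexZ z hz g hg)
    rw [e, hφe _ _ (hexZ z hz g hg), ← hact.2.2 _ _ _ hX, hg'']
    simp
  let Φ : (G → Fin (k + 2)) → (ℕ → Bool) := fun z =>
    if h : ∃ g, z g ≠ 0 then act h.choose (φ (ex z h.choose)) else fun _ => false
  have hΦ : ∀ z ∈ Z', ∀ g, z g ≠ 0 → Φ z = act g (φ (ex z g)) := by
    intro z hz g hg
    have h : ∃ g, z g ≠ 0 := ⟨g, hg⟩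
    simp only [Φ, dif_pos h]
    exact hwd z hz g _ hg h.choose_spec
  have hshift : ∀ g, ∀ z ∈ Z', shift g z ∈ Z' := by
    intro g z hz g'
    have := hz (g⁻¹ * g')
    simpa only [shift, mul_assoc] using this
  refine ⟨k + 2, Z', Φ, hZ', ?_, ?_, ?_, ?_⟩
  · intro z hz
    obtain ⟨g, hg⟩ := hex z hz
    let O : Set (G → Fin (k + 2)) := {z | z g ≠ 0}
    have hO : IsOpen O :=
      isOpen_ne_fun (continuous_apply g) continuous_const
    have hcont : ContinuousOn (fun z => act g (φ (ex z g))) (Z' ∩ O) := by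
      refine (hc g).comp (hφc.comp ?_ ?_) ?_
      · refine Continuous.continuousOn ?_
        refine continuous_pi fun n => ?_
        exact (continuous_of_discreteTopology (f := d)).comp (continuous_apply _)
      · exact fun z hz => hexZ z hz.1 g hz.2
      · exact fun z hz => hφm (hexZ z hz.1 g hz.2)
    have h2 : ContinuousOn Φ (Z' ∩ O) := hcont.congr fun z hz => hΦ z hz.1 g hz.2
    exact (h2 z ⟨hz, hg⟩).mono_of_mem_nhdsWithin
      (Filter.inter_mem self_mem_nhdsWithin (mem_nhdsWithin_of_mem_nhds (hO.mem_nhds hg)))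
  · intro z hz
    obtain ⟨g, hg⟩ := hex z hz
    rw [hΦ z hz g hg]
    exact hact.1 g (hφm (hexZ z hz g hg))
  · intro x hx
    obtain ⟨z0, hz0, rfl⟩ := hφs hx
    let z : G → Fin (k + 2) := fun g => if h : g ∈ N then Fin.succ (z0 ⟨g, h⟩) else 0
    have hz1 : ∀ g (h : g ∈ N), z g = Fin.succ (z0 ⟨g, h⟩) := fun g h => by simp [z, h]
    have hzne : ∀ g, z g ≠ 0 ↔ g ∈ N := by
      intro g
      by_cases h : g ∈ N
      · simp [z, h, Fin.succ_ne_zero]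
      · simp [z, h]
    have hzeq : ∀ g, z g = 0 ↔ g ∉ N := fun g => by rw [← hzne]; simp
    have hz : z ∈ Z' := by
      intro g
      refine ⟨fun u hu => ?_, ?_, fun t ht t' ht' h h' => ?_, fun h1 => ?_⟩
      · simp only [hzeq, mul_one]
        rw [N.mul_mem_cancel_right u.2]
      · obtain ⟨t, ht, h⟩ := hT g⁻¹
        refine ⟨t, ht, (hzne _).2 ?_⟩
        have := N.inv_mem h
        simpa using this
      · have h := (hzne _).1 h
        have h' := (hzne _).1 h'
        have := N.mul_mem (N.inv_mem h) h'
        simpa [mul_assoc] using this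
      · have h := (hzne _).1 h1
        rw [mul_one] at h
        have := (hZ z0).1 hz0 ⟨g, h⟩
        convert this using 1
        funext u
        have e := hz1 _ (N.mul_mem h (u : N).2)
        simp only [e, hd]
        rfl
    refine ⟨z, hz, ?_⟩
    have h1 : z 1 ≠ 0 := (hzne 1).2 N.one_mem
    have e : ex z 1 = z0 := by
      funext n
      simp only [ex, one_mul]
      rw [hz1 _ n.2, hd]
    rw [hΦ z hz 1 h1, e, hact.2.1 _ hx]
  · intro g z hz
    obtain ⟨g0, hg0⟩ := hex z hz
    have h1 : shift g z (g * g0) ≠ 0 := by simpa [shift] using hg0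
    rw [hΦ _ (hshift g z hz) (g * g0) h1, hΦ z hz g0 hg0]
    have e : ex (shift g z) (g * g0) = ex z g0 := by
      funext n
      simp [ex, shift, mul_assoc]
    rw [e]
    exact hact.2.2 _ _ _ (hφm (hexZ z hz g0 hg0))

/-- A finitely generated group with a normal finite index self-simulable
subgroup is self-simulable. -/
theorem selfSimulable_of_normal_finiteIndex
    (G : Type*) [Group G] (hfg : Group.FG G)
    (N : Subgroup G) (hnorm : N.Normal) (hfi : N.FiniteIndex)
    (hss : SelfSimulable ↥N) :
    SelfSimulable G := by
  intro X act h
  have hN : Group.FG N := N.fg_of_index_ne_zero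
  have hact : IsActionOn act X := by
    obtain ⟨m, s, hs⟩ := h
    exact hs.2.1
  exact factor_induce N hN hfi hact (continuousOn_act h) (hss X _ (restrict_effClosed N hN h))

end SelfSim
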